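/- arXiv:2410.10239 — 2 statements merged into one kernel-verified Lean document; each statement's English description precedes it below -/
import Mathlib

section
/- Let α ∈ (0,1) and let Y and Z be real-valued random variables, each with a density on ℝ, such that Y + Z also has a density. Let F_Y, F_Z, F_{Y+Z} be their cumulative distribution functions, set U_Y = F_Y(Y), U_Z = F_Z(Z), U_{Y+Z} = F_{Y+Z}(Y+Z), and A_Y = 1_{{U_Y ≥ α}}, A_Z = 1_{{U_Z ≥ α}}, A_{Y+Z} = 1_{{U_{Y+Z} ≥ α}}. If E(Y·A_Y) + E(Z·A_Z) − E((Y+Z)·A_{Y+Z}) = 0, then the events {U_Y ≥ α}, {U_Z ≥ α} and {U_{Y+Z} ≥ α} coincide almost surely. -/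
open MeasureTheory ProbabilityTheory Filter Matrix Set

noncomputable section

/-- Value-at-Risk at level `α` of a real random variable `W` under `μ`:
`min {M : ℝ | ℙ(W ≤ M) ≥ α}`. -/
def VaR {Ω : Type*} [MeasurableSpace Ω] (μ : Measure Ω) (α : ℝ) (W : Ω → ℝ) : ℝ :=
  sInf {M : ℝ | α ≤ (μ {ω | W ω ≤ M}).toReal}

/-- Conditional Value-at-Risk `E(W | W ≥ VaR_α(W))`. -/
def CVaR {Ω : Type*} [MeasurableSpace Ω] (μ : Measure Ω) (α : ℝ) (W : Ω → ℝ) : ℝ :=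
  ((μ {ω | VaR μ α W ≤ W ω}).toReal)⁻¹ * ∫ ω in {ω | VaR μ α W ≤ W ω}, W ω ∂μ

/-- Rockafellar–Uryasev auxiliary function `g(γ, ζ) = ζ + (1-α)⁻¹ E[(-γᵀX - ζ)⁺]`. -/
def gAux {Ω : Type*} [MeasurableSpace Ω] (μ : Measure Ω) {d : ℕ} (α : ℝ)
    (X : Ω → Fin d → ℝ) (γ : Fin d → ℝ) (ζ : ℝ) : ℝ :=
  ζ + (1 - α)⁻¹ * ∫ ω, max (-(γ ⬝ᵥ X ω) - ζ) 0 ∂μ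

/-- Empirical counterpart of `gAux`, built from the sample `Xs 0, …, Xs (N-1)`. -/
def gAuxN {Ω : Type*} [MeasurableSpace Ω] {d : ℕ} (α : ℝ)
    (Xs : ℕ → Ω → Fin d → ℝ) (N : ℕ) (γ : Fin d → ℝ) (ζ : ℝ) (ω : Ω) : ℝ :=
  ζ + (1 - α)⁻¹ * ((N : ℝ)⁻¹ * ∑ j ∈ Finset.range N, max (-(γ ⬝ᵥ Xs j ω) - ζ) 0)

/-- `x` solves the problem: minimize `f` over `s` subject to `c ≤ K`. -/
def Solves {E : Type*} (f c : E → ℝ) (K : ℝ) (s : Set E) (x : E) : Prop :=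
  x ∈ s ∧ c x ≤ K ∧ ∀ y ∈ s, c y ≤ K → f x ≤ f y

/-- Deviation of the set `A` from the set `B`: `sup_{x ∈ A} inf_{y ∈ B} ‖x - y‖`. -/
def setDev {E : Type*} [PseudoMetricSpace E] (A B : Set E) : ℝ :=
  ⨆ x ∈ A, ⨅ y ∈ B, dist x y

/-- The set of minimizers of `f` on `s`. -/
def argminSet {E : Type*} (f : E → ℝ) (s : Set E) : Set E :=
  {x ∈ s | ∀ y ∈ s, f x ≤ f y}

/-- Support of a measure on `ℝ`: points all of whose neighborhoods have positive measure. -/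
def measSupport (ν : Measure ℝ) : Set ℝ := {x | ∀ s ∈ nhds x, ν s ≠ 0}

theorem continuous_cdf_of_nullSingletonClass (ν : Measure ℝ) [IsProbabilityMeasure ν]
    [NullSingletonClass ν] : Continuous (cdf ν) := by
  refine continuous_iff_continuousAt.2 fun x => ?_
  refine continuousAt_iff_continuous_left'_right'.2
    ⟨(monotone_cdf ν).continuousWithinAt_Iio_iff_leftLim_eq.2 ?_,
      ((cdf ν).right_continuous x).mono Ioi_subset_Ici_self⟩
  have h : ν {x} = 0 := measure_singleton x
  rw [← measure_cdf ν, StieltjesFunction.measure_singleton, ENNReal.ofReal_eq_zero] at h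
  exact le_antisymm ((monotone_cdf ν).leftLim_le le_rfl) (by linarith)

/-- The superlevel set `{α ≤ F}` of a continuous cumulative distribution function `F` is a
half-line `[q, ∞)` with `F q = α`. -/
theorem exists_quantile_of_continuous_cdf {ν : Measure ℝ} (hν : Continuous (cdf ν))
    {α : ℝ} (hα : α ∈ Ioo (0 : ℝ) 1) :
    ∃ q, cdf ν q = α ∧ ∀ x, α ≤ cdf ν x ↔ q ≤ x := by
  obtain ⟨a, ha⟩ := ((tendsto_cdf_atBot ν).eventually_lt_const hα.1).exists
  obtain ⟨b, hb⟩ := ((tendsto_cdf_atTop ν).eventually_const_lt hα.2).exists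
  set S : Set ℝ := {x | α ≤ cdf ν x}
  have hbdd : BddBelow S := ⟨a, fun x hx => by
    by_contra! hxa
    exact absurd (monotone_cdf ν hxa.le) (not_le.2 (ha.trans_le hx))⟩
  have hmem : sInf S ∈ S :=
    (isClosed_le continuous_const hν).csInf_mem ⟨b, hb.le⟩ hbdd
  obtain ⟨c, hc⟩ := mem_range_of_exists_le_of_exists_ge hν ⟨a, ha.le⟩ ⟨b, hb.le⟩
  exact ⟨sInf S, le_antisymm (hc ▸ monotone_cdf ν (csInf_le hbdd hc.ge)) hmem, fun x =>
    ⟨fun hx => csInf_le hbdd hx, fun hx => hmem.trans (monotone_cdf ν hx)⟩⟩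

/-- For `W` with a density, `{F_W(W) ≥ α}` is a tail event `{q ≤ W}` of probability `1 - α`. -/
theorem exists_tail_of_hasPDF {Ω : Type*} [MeasurableSpace Ω] {μ : Measure Ω}
    [IsProbabilityMeasure μ] {α : ℝ} (hα : α ∈ Ioo (0 : ℝ) 1) {W : Ω → ℝ} (hWm : Measurable W)
    (hW : HasPDF W μ) :
    ∃ q, {ω | α ≤ cdf (μ.map W) (W ω)} = {ω | q ≤ W ω} ∧ μ {ω | W ω = q} = 0 ∧
      μ.real {ω | q ≤ W ω} = 1 - α := by
  have : IsProbabilityMeasure (μ.map W) := Measure.isProbabilityMeasure_map hWm.aemeasurable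
  have : NullSingletonClass (μ.map W) := ⟨fun _ => hW.absolutelyContinuous' Real.volume_singleton⟩
  obtain ⟨q, hq, hS⟩ :=
    exists_quantile_of_continuous_cdf (continuous_cdf_of_nullSingletonClass (μ.map W)) hα
  refine ⟨q, by simp [hS], ?_, ?_⟩
  · rw [← measure_singleton (μ := μ.map W) q, Measure.map_apply hWm (measurableSet_singleton q)]
    rfl
  · have hIci : (μ.map W).real (Ici q) = 1 - α := by
      rw [← hq, cdf_eq_real, ← probReal_compl_eq_one_sub measurableSet_Iic, compl_Iic,
        ← Ioi_insert]
      exact measureReal_congr (insert_ae_eq_self q _)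
    rw [← hIci, map_measureReal_apply hWm measurableSet_Ici]
    rfl

/-- Among events `B` of the same probability, the tail event `{q ≤ W}` maximizes `∫ ω in B, W ω`,
and it is the unique maximizer up to null sets when `W` has no atom at `q`. -/
theorem setIntegral_le_tail {Ω : Type*} [MeasurableSpace Ω] {μ : Measure Ω}
    [IsFiniteMeasure μ] {W : Ω → ℝ} (hWm : Measurable W) (hW : Integrable W μ) {q : ℝ}
    (hq : μ {ω | W ω = q} = 0) {B : Set Ω} (hB : MeasurableSet B)
    (hμ : μ.real {ω | q ≤ W ω} = μ.real B) :
    ∫ ω in B, W ω ∂μ ≤ ∫ ω in {ω | q ≤ W ω}, W ω ∂μ ∧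
      (∫ ω in B, W ω ∂μ = ∫ ω in {ω | q ≤ W ω}, W ω ∂μ → {ω | q ≤ W ω} =ᵐ[μ] B) := by
  set A : Set Ω := {ω | q ≤ W ω} with hAdef
  have hA : MeasurableSet A := measurableSet_le measurable_const hWm
  have hV : Integrable (fun ω => W ω - q) μ := hW.sub (integrable_const q)
  set f : Ω → ℝ := fun ω => A.indicator (fun ω => W ω - q) ω - B.indicator (fun ω => W ω - q) ω
    with hf
  have hfint : Integrable f μ := (hV.indicator hA).sub (hV.indicator hB)
  have hf0 : 0 ≤ f := by
    intro ω
    by_cases h1 : q ≤ W ω <;> by_cases h2 : ω ∈ B <;> simp [hf, hAdef, h1, h2]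
    exact (not_le.1 h1).le
  have hcalc : ∫ ω, f ω ∂μ = ∫ ω in A, W ω ∂μ - ∫ ω in B, W ω ∂μ := by
    rw [integral_sub (hV.indicator hA) (hV.indicator hB), integral_indicator hA,
      integral_indicator hB, integral_sub hW.integrableOn (integrable_const q),
      integral_sub hW.integrableOn (integrable_const q), setIntegral_const, setIntegral_const, hμ]
    ring
  refine ⟨by linarith [integral_nonneg hf0 (μ := μ)], fun heq => ?_⟩
  have hzero : f =ᵐ[μ] 0 := (integral_eq_zero_iff_of_nonneg hf0 hfint).1 (by linarith)
  have hne : ∀ᵐ ω ∂μ, W ω ≠ q := by simpa [ae_iff] using hq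
  filter_upwards [hzero, hne] with ω h hω
  have hω' : W ω - q ≠ 0 := sub_ne_zero.2 hω
  apply propext
  change ω ∈ A ↔ ω ∈ B
  clear_value A
  by_cases h1 : ω ∈ A <;> by_cases h2 : ω ∈ B <;> simp [hf, h1, h2] at h ⊢
  · exact hω' h
  · exact hω (by linarith)

/-- Comonotonicity lemma: if `Y`, `Z` and `Y + Z` have densities and
`E(Y·A_Y) + E(Z·A_Z) - E((Y+Z)·A_{Y+Z}) = 0`, where `A_W = 1_{F_W(W) ≥ α}`, then the
events `{F_Y(Y) ≥ α}`, `{F_Z(Z) ≥ α}` and `{F_{Y+Z}(Y+Z) ≥ α}` coincide a.s. -/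
theorem statement16 {Ω : Type*} [MeasurableSpace Ω] (μ : Measure Ω) [IsProbabilityMeasure μ]
    (α : ℝ) (hα : α ∈ Ioo (0 : ℝ) 1)
    (Y Z : Ω → ℝ) (hYm : Measurable Y) (hZm : Measurable Z)
    (hYint : Integrable Y μ) (hZint : Integrable Z μ)
    (hY : HasPDF Y μ) (hZ : HasPDF Z μ) (hYZ : HasPDF (fun ω => Y ω + Z ω) μ)
    (hzero :
      (∫ ω in {ω | α ≤ cdf (μ.map Y) (Y ω)}, Y ω ∂μ) +
        (∫ ω in {ω | α ≤ cdf (μ.map Z) (Z ω)}, Z ω ∂μ) -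
        (∫ ω in {ω | α ≤ cdf (μ.map (fun ω' => Y ω' + Z ω')) (Y ω + Z ω)},
          (Y ω + Z ω) ∂μ) = 0) :
    {ω | α ≤ cdf (μ.map Y) (Y ω)} =ᵐ[μ] {ω | α ≤ cdf (μ.map Z) (Z ω)} ∧
    {ω | α ≤ cdf (μ.map Y) (Y ω)} =ᵐ[μ]
      {ω | α ≤ cdf (μ.map (fun ω' => Y ω' + Z ω')) (Y ω + Z ω)} := by
  have hSm : Measurable fun ω => Y ω + Z ω := hYm.add hZm
  obtain ⟨y, hy, hy0, hyα⟩ := exists_tail_of_hasPDF hα hYm hY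
  obtain ⟨z, hz, hz0, hzα⟩ := exists_tail_of_hasPDF hα hZm hZ
  obtain ⟨s, hs, -, hsα⟩ := exists_tail_of_hasPDF hα hSm hYZ
  rw [hy, hz, hs] at hzero
  rw [hy, hz, hs]
  have hB : MeasurableSet {ω | s ≤ Y ω + Z ω} := measurableSet_le measurable_const hSm
  obtain ⟨hYle, hYeq⟩ := setIntegral_le_tail hYm hYint hy0 hB (hyα.trans hsα.symm)
  obtain ⟨hZle, hZeq⟩ := setIntegral_le_tail hZm hZint hz0 hB (hzα.trans hsα.symm)
  rw [integral_add hYint.integrableOn hZint.integrableOn] at hzero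
  have hYS := hYeq (by linarith)
  exact ⟨hYS.trans (hZeq (by linarith)).symm, hYS⟩

end
end

section
/- Let 𝓡 be a connected subset of ℝ^d with non-empty interior, and let φ₁, φ₂ be two non-zero affine forms on ℝ^d. If φ₁(x)·φ₂(x) ≥ 0 for all x ∈ 𝓡 and the interior of 𝓡 meets the zero set of each φ_i (i = 1, 2), then there exists a > 0 such that φ₁ = a·φ₂. -/
open MeasureTheory ProbabilityTheory Filter Matrix Set

noncomputable section

/-- An affine function on `ℝ^d` whose product with a non-constant affine function vanishing at `x`
is nonnegative near `x` must vanish at `x`, and the product of the linear parts is nonnegative. -/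
theorem eq_zero_and_dotProduct_mul_nonneg_of_mem_interior {d : ℕ} {R : Set (Fin d → ℝ)}
    {c1 c2 : Fin d → ℝ} {t1 t2 : ℝ} (hc1 : c1 ≠ 0)
    (hsign : ∀ x ∈ R, 0 ≤ (c1 ⬝ᵥ x + t1) * (c2 ⬝ᵥ x + t2))
    {x : Fin d → ℝ} (hx : x ∈ interior R) (hx1 : c1 ⬝ᵥ x + t1 = 0) :
    c2 ⬝ᵥ x + t2 = 0 ∧ ∀ v, 0 ≤ (c1 ⬝ᵥ v) * (c2 ⬝ᵥ v) := by
  have hline : ∀ v : Fin d → ℝ, ∃ r > 0, ∀ s : ℝ, |s| < r →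
      0 ≤ (s * (c1 ⬝ᵥ v)) * (c2 ⬝ᵥ x + t2 + s * (c2 ⬝ᵥ v)) := by
    intro v
    have hcont : Continuous fun s : ℝ => x + s • v := by fun_prop
    have hmem : ∀ᶠ s in nhds (0 : ℝ), x + s • v ∈ R :=
      hcont.continuousAt.eventually_mem (by simpa using mem_interior_iff_mem_nhds.1 hx)
    obtain ⟨r, hr, h⟩ := Metric.eventually_nhds_iff.1 hmem
    refine ⟨r, hr, fun s hs => ?_⟩
    have h' := hsign _ (h (by simpa using hs))
    simp only [dotProduct_add, dotProduct_smul, smul_eq_mul] at h'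
    convert h' using 2 <;> linarith
  have hzero : c2 ⬝ᵥ x + t2 = 0 := by
    obtain ⟨r, hr, h⟩ := hline c1
    have hn : 0 < c1 ⬝ᵥ c1 :=
      lt_of_le_of_ne (Finset.sum_nonneg fun i _ => mul_self_nonneg _)
        (Ne.symm (mt dotProduct_self_eq_zero.1 hc1))
    by_contra hp
    set p := c2 ⬝ᵥ x + t2
    set m := c2 ⬝ᵥ c1
    have hp' : 0 < |p| := abs_pos.2 hp
    have hbound : ∀ s, 0 < s → s < r → |p| ≤ s * |m| := by
      intro s hs hsr
      have hpos := h s (by rwa [abs_of_pos hs])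
      have hneg := h (-s) (by rwa [abs_neg, abs_of_pos hs])
      have hsn := mul_pos hs hn
      have h1 : 0 ≤ p + s * m := nonneg_of_mul_nonneg_right hpos hsn
      have h2 : 0 ≤ -(p - s * m) :=
        nonneg_of_mul_nonneg_right (by linarith : 0 ≤ (s * (c1 ⬝ᵥ c1)) * -(p - s * m)) hsn
      have := mul_le_mul_of_nonneg_left (le_abs_self m) hs.le
      exact abs_le.2 ⟨by linarith, by linarith⟩
    have hm : 0 < |m| + 1 := by positivity
    have hs : 0 < min (r / 2) (|p| / (|m| + 1)) := by positivity
    have h1 := hbound _ hs ((min_le_left _ _).trans_lt (half_lt_self hr))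
    have h2 := (le_div_iff₀ hm).1 (min_le_right (r / 2) (|p| / (|m| + 1)))
    linarith
  refine ⟨hzero, fun v => ?_⟩
  obtain ⟨r, hr, h⟩ := hline v
  have h' := h (r / 2) (by rw [abs_of_pos (half_pos hr)]; exact half_lt_self hr)
  rw [hzero, zero_add] at h'
  exact nonneg_of_mul_nonneg_right
    (by linarith : 0 ≤ (r / 2 * (r / 2)) * ((c1 ⬝ᵥ v) * (c2 ⬝ᵥ v))) (by positivity)

/-- Two nonzero vectors whose pairings with every vector have the same sign are positively
proportional. -/
theorem exists_pos_eq_smul_of_dotProduct_mul_nonneg {d : ℕ} {c1 c2 : Fin d → ℝ}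
    (hc1 : c1 ≠ 0) (hc2 : c2 ≠ 0) (h : ∀ v, 0 ≤ (c1 ⬝ᵥ v) * (c2 ⬝ᵥ v)) :
    ∃ a : ℝ, 0 < a ∧ c1 = a • c2 := by
  have hself : ∀ c : Fin d → ℝ, 0 ≤ c ⬝ᵥ c :=
    fun c => Finset.sum_nonneg fun i _ => mul_self_nonneg _
  have hw : 0 < c1 ⬝ᵥ c1 := (hself c1).lt_of_ne' (mt dotProduct_self_eq_zero.1 hc1)
  have hq : 0 < c2 ⬝ᵥ c2 := (hself c2).lt_of_ne' (mt dotProduct_self_eq_zero.1 hc2)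
  have hm : 0 ≤ c1 ⬝ᵥ c2 := by
    have := h c1
    rw [dotProduct_comm c2 c1] at this
    exact nonneg_of_mul_nonneg_right this hw
  have hvar : ∀ k : ℝ, 0 ≤ ((c2 ⬝ᵥ c2) * (c1 ⬝ᵥ c1) - k * (c1 ⬝ᵥ c2)) *
      ((c2 ⬝ᵥ c2) * (c1 ⬝ᵥ c2) - k * (c2 ⬝ᵥ c2)) := by
    intro k
    simpa [dotProduct_sub, dotProduct_smul, dotProduct_comm c2 c1] using
      h ((c2 ⬝ᵥ c2) • c1 - k • c2)
  have hsq : ((c2 ⬝ᵥ c2) • c1 - (c1 ⬝ᵥ c2) • c2) ⬝ᵥ ((c2 ⬝ᵥ c2) • c1 - (c1 ⬝ᵥ c2) • c2) =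
      (c2 ⬝ᵥ c2) * ((c2 ⬝ᵥ c2) * (c1 ⬝ᵥ c1) - (c1 ⬝ᵥ c2) * (c1 ⬝ᵥ c2)) := by
    simp only [dotProduct_sub, sub_dotProduct, dotProduct_smul, smul_dotProduct, smul_eq_mul,
      dotProduct_comm c2 c1]
    ring
  set w := c1 ⬝ᵥ c1
  set m := c1 ⬝ᵥ c2
  set q := c2 ⬝ᵥ c2
  have hD : q * w - m * m ≤ 0 := by
    by_contra! hD
    have hε : 0 < (q * w - m * m) / (m + 1) := by positivity
    have hεm : (q * w - m * m) / (m + 1) * (m + 1) = q * w - m * m :=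
      div_mul_cancel₀ _ (by positivity)
    have hk := hvar (m + (q * w - m * m) / (m + 1))
    set ε := (q * w - m * m) / (m + 1)
    have : (q * w - (m + ε) * m) * (q * m - (m + ε) * q) = -(ε * (ε * q)) := by
      linear_combination (ε * q) * hεm
    have : 0 < ε * (ε * q) := by positivity
    linarith
  have hv : q • c1 - m • c2 = 0 :=
    dotProduct_self_eq_zero.1
      (le_antisymm (hsq.trans_le (mul_nonpos_of_nonneg_of_nonpos hq.le hD)) (hself _))
  have heq : c1 = (m / q) • c2 := by
    rw [div_eq_inv_mul, mul_smul, ← sub_eq_zero.1 hv, inv_smul_smul₀ hq.ne']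
  refine ⟨m / q, (div_nonneg hm hq.le).lt_of_ne' fun h0 => hc1 ?_, heq⟩
  rw [heq, h0, zero_smul]

/-- Affine-forms lemma: if `𝓡 ⊆ ℝ^d` is connected with non-empty interior, `φ₁, φ₂` are
non-zero affine forms with `φ₁ φ₂ ≥ 0` on `𝓡`, and the interior of `𝓡` meets the zero
set of each `φᵢ`, then `φ₁ = a φ₂` for some `a > 0`. -/
theorem statement17 {d : ℕ} (R : Set (Fin d → ℝ)) (hconn : IsConnected R)
    (hint : (interior R).Nonempty)
    (c1 c2 : Fin d → ℝ) (t1 t2 : ℝ) (hc1 : c1 ≠ 0) (hc2 : c2 ≠ 0)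
    (hsign : ∀ x ∈ R, 0 ≤ (c1 ⬝ᵥ x + t1) * (c2 ⬝ᵥ x + t2))
    (hk1 : (interior R ∩ {x : Fin d → ℝ | c1 ⬝ᵥ x + t1 = 0}).Nonempty)
    (hk2 : (interior R ∩ {x : Fin d → ℝ | c2 ⬝ᵥ x + t2 = 0}).Nonempty) :
    ∃ a : ℝ, 0 < a ∧ ∀ x : Fin d → ℝ, c1 ⬝ᵥ x + t1 = a * (c2 ⬝ᵥ x + t2) := by
  obtain ⟨x, hx, hx1⟩ := hk1
  obtain ⟨hx2, hv⟩ := eq_zero_and_dotProduct_mul_nonneg_of_mem_interior hc1 hsign hx hx1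
  obtain ⟨a, ha, rfl⟩ := exists_pos_eq_smul_of_dotProduct_mul_nonneg hc1 hc2 hv
  refine ⟨a, ha, fun y => ?_⟩
  simp only [mem_ofPred_eq, smul_dotProduct, smul_eq_mul] at hx1 ⊢
  linear_combination hx1 - a * hx2

end
end
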